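/- Let d ≥ 1 and let K : ℝ^d → ℝ be integrable, bounded, and continuous almost everywhere with ∫_{ℝ^d} K(x) dx ≠ 0. Then the set of all finite linear combinations x ↦ ∑_{i=1}^r A_i K((x − c_i)/L_i), with r ∈ ℕ, coefficients A_i ∈ ℝ, scales L_i > 0, and centers c_i ∈ ℝ^d, is dense in L^q(ℝ^d) for every 1 ≤ q < ∞. -/

import Mathlib

open MeasureTheory Real
open scoped ENNReal

/-!
Write `τ_c` for translation by `c` and `K_L x = K (x / L)`, and let `g ∈ L^1 ∩ L^q`. As `L^q`-valued
Bochner integrals, commutativity of convolution reads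
`L ^ d • ∫ K u • τ_{L u} g du = ∫ K_L c • τ_c g dc = ∫ g c • τ_c K_L dc`.
The right-hand side is a limit of linear combinations of translates of `K_L`. Translations being
continuous isometries of `L^q`, dominated convergence gives `∫ K u • τ_{L u} g du → (∫ K) • g`
as `L → 0`. Hence `g` lies in the closed span of the dilated translates of `K`, and such `g` are
dense in `L^q`.
-/

namespace ParkSandberg

open Filter Topology ContinuousLinearMap
open scoped Convolution

section LpIntegral

variable {X Y F : Type*} [MeasurableSpace X] [MeasurableSpace Y] [NormedAddCommGroup F]
  {μ : Measure Y} {q : ℝ≥0∞}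

lemma memLp_of_integrable_of_bound (hq_one : 1 ≤ q) {f : Y → F} (hf : Integrable f μ) {C : ℝ}
    (hC : ∀ᵐ y ∂μ, ‖f y‖ ≤ C) : MemLp f q μ := by
  rcases eq_or_ne q ∞ with rfl | hq
  · exact memLp_top_of_bound hf.aestronglyMeasurable C hC
  have hr : 0 ≤ q.toReal - 1 := by
    simpa using ENNReal.toReal_mono hq hq_one
  rw [← integrable_norm_rpow_iff hf.aestronglyMeasurable (zero_lt_one.trans_le hq_one).ne' hq]
  refine (hf.norm.const_mul (C ^ (q.toReal - 1))).mono'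
    (hf.aestronglyMeasurable.norm.aemeasurable.pow_const _).aestronglyMeasurable ?_
  filter_upwards [hC] with y hy
  calc ‖‖f y‖ ^ q.toReal‖ = ‖f y‖ ^ (q.toReal - 1) * ‖f y‖ := by
        rw [Real.norm_of_nonneg (by positivity),
          ← Real.rpow_add_one' (norm_nonneg _) (by linarith), sub_add_cancel]
    _ ≤ C ^ (q.toReal - 1) * ‖f y‖ := by gcongr

lemma setIntegral_norm_le_of_Lp [hq : Fact (1 ≤ q)] {s : Set Y} (hs : μ s ≠ ∞) (f : Lp F q μ) :
    ∫ y in s, ‖f y‖ ∂μ ≤ (μ s ^ (1 - 1 / q.toReal)).toReal * ‖f‖ := by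
  have hexp : 0 ≤ 1 - 1 / q.toReal := by
    rcases eq_or_ne q ∞ with rfl | hq_top
    · simp
    · have : 1 ≤ q.toReal := by simpa using ENNReal.toReal_mono hq_top hq.out
      linarith [(div_le_one (zero_lt_one.trans_le this)).2 this]
  have hμs : μ s ^ (1 - 1 / q.toReal) ≠ ∞ := ENNReal.rpow_ne_top_of_nonneg hexp hs
  have hHolder : ∫⁻ y in s, ‖f y‖ₑ ∂μ ≤ μ s ^ (1 - 1 / q.toReal) * eLpNorm f q μ :=
    calc ∫⁻ y in s, ‖f y‖ₑ ∂μ = eLpNorm f 1 (μ.restrict s) := eLpNorm_one_eq_lintegral_enorm.symm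
      _ ≤ eLpNorm f q (μ.restrict s) * μ s ^ (1 - 1 / q.toReal) := by
        simpa using eLpNorm_le_eLpNorm_mul_rpow_measure_univ hq.out
          (Lp.aestronglyMeasurable f).restrict
      _ ≤ μ s ^ (1 - 1 / q.toReal) * eLpNorm f q μ := by
        rw [mul_comm]; gcongr; exact Measure.restrict_le_self
  rw [integral_norm_eq_lintegral_enorm (Lp.aestronglyMeasurable f).restrict, Lp.norm_def,
    ← ENNReal.toReal_mul]
  exact ENNReal.toReal_mono (ENNReal.mul_ne_top hμs (Lp.eLpNorm_ne_top f)) hHolder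

/-- The set integral `f ↦ ∫ y in s, f y ∂μ` over a set of finite measure, as a continuous linear
map on `L^q`. -/
noncomputable def setIntegralLp [NormedSpace ℝ F] [hq : Fact (1 ≤ q)] (s : Set Y) (hs : μ s ≠ ∞) :
    Lp F q μ →L[ℝ] F :=
  LinearMap.mkContinuous
    { toFun f := ∫ y in s, f y ∂μ
      map_add' f g := by
        rw [← integral_add (integrableOn_Lp_of_measure_ne_top f hq.out hs)
          (integrableOn_Lp_of_measure_ne_top g hq.out hs)]
        exact integral_congr_ae (ae_restrict_of_ae (Lp.coeFn_add f g))
      map_smul' a f := by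
        rw [RingHom.id_apply, ← integral_smul]
        exact integral_congr_ae (ae_restrict_of_ae (Lp.coeFn_smul a f)) }
    (μ s ^ (1 - 1 / q.toReal)).toReal
    fun f => (norm_integral_le_integral_norm _).trans (setIntegral_norm_le_of_Lp hs f)

variable {ν : Measure X} [Fact (1 ≤ q)] {φ : X → Lp F q μ} {Φ : X → Y → F}

lemma integrable_uncurry_of_integrable_Lp [SFinite μ]
    (hφ : Integrable φ ν) (hΦ : AEStronglyMeasurable (Function.uncurry Φ) (ν.prod μ))
    (hφΦ : ∀ᵐ x ∂ν, φ x =ᵐ[μ] Φ x) {s : Set Y} (hs : μ s ≠ ∞) :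
    Integrable (Function.uncurry Φ) (ν.prod (μ.restrict s)) := by
  have hΦs : AEStronglyMeasurable (Function.uncurry Φ) (ν.prod (μ.restrict s)) :=
    hΦ.mono_measure (Measure.prod_mono le_rfl Measure.restrict_le_self)
  refine (integrable_prod_iff hΦs).2 ⟨?_, ?_⟩
  · filter_upwards [hφΦ] with x hx
    exact (integrableOn_Lp_of_measure_ne_top (φ x) Fact.out hs).congr (ae_restrict_of_ae hx)
  · refine (hφ.norm.const_mul (μ s ^ (1 - 1 / q.toReal)).toReal).mono'
      hΦs.norm.integral_prod_right' ?_
    filter_upwards [hφΦ] with x hx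
    rw [Real.norm_of_nonneg (integral_nonneg fun _ => norm_nonneg _)]
    calc ∫ y in s, ‖Φ x y‖ ∂μ = ∫ y in s, ‖φ x y‖ ∂μ :=
          integral_congr_ae (ae_restrict_of_ae (hx.symm.fun_comp norm))
      _ ≤ _ := setIntegral_norm_le_of_Lp hs (φ x)

theorem coeFn_integral_Lp [SFinite ν] [SigmaFinite μ] [NormedSpace ℝ F] [CompleteSpace F]
    (hφ : Integrable φ ν) (hΦ : AEStronglyMeasurable (Function.uncurry Φ) (ν.prod μ))
    (hφΦ : ∀ᵐ x ∂ν, φ x =ᵐ[μ] Φ x) :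
    (∫ x, φ x ∂ν : Lp F q μ) =ᵐ[μ] fun y => ∫ x, Φ x y ∂ν := by
  refine ae_eq_of_forall_setIntegral_eq_of_sigmaFinite
    (fun s _ hs => integrableOn_Lp_of_measure_ne_top _ Fact.out hs.ne)
    (fun s _ hs => (integrable_uncurry_of_integrable_Lp hφ hΦ hφΦ hs.ne).integral_prod_right)
    fun s _ hs => ?_
  calc ∫ y in s, (∫ x, φ x ∂ν : Lp F q μ) y ∂μ
      = ∫ x, ∫ y in s, φ x y ∂μ ∂ν := ((setIntegralLp s hs.ne).integral_comp_comm hφ).symm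
    _ = ∫ x, ∫ y in s, Φ x y ∂μ ∂ν :=
        integral_congr_ae (hφΦ.mono fun x hx => integral_congr_ae (ae_restrict_of_ae hx))
    _ = ∫ y in s, ∫ x, Φ x y ∂ν ∂μ :=
        integral_integral_swap (integrable_uncurry_of_integrable_Lp hφ hΦ hφΦ hs.ne)

lemma dense_setOf_integrable_Lp (hq : q ≠ ∞) : Dense {f : Lp F q μ | Integrable f μ} := by
  have hq0 : q ≠ 0 := (zero_lt_one.trans_le (Fact.out : 1 ≤ q)).ne'
  refine (Lp.simpleFunc.dense hq).mono fun f hf => ?_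
  have hmem := Lp.simpleFunc.memLp ⟨f, hf⟩
  exact ((SimpleFunc.memLp_iff_integrable hq0 hq).1 hmem).congr
    (Lp.simpleFunc.toSimpleFunc_eq_toFun ⟨f, hf⟩)

end LpIntegral

lemma integral_mem_of_isClosed {X F : Type*} [MeasurableSpace X] {μ : Measure X}
    [NormedAddCommGroup F] [NormedSpace ℝ F] [CompleteSpace F] {M : Submodule ℝ F}
    (hM : IsClosed (M : Set F)) {φ : X → F} (hφ : ∀ x, φ x ∈ M) : ∫ x, φ x ∂μ ∈ M := by
  by_cases hint : Integrable φ μ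
  · have : IsClosed (M : Set F) := hM
    have hzero : ∀ x, M.mkQL (φ x) = 0 := fun x => (Submodule.Quotient.mk_eq_zero M).2 (hφ x)
    have hcomm := M.mkQL.integral_comp_comm hint
    simp only [hzero, integral_zero] at hcomm
    exact (Submodule.Quotient.mk_eq_zero M).1 hcomm.symm
  · rw [integral_undef hint]
    exact M.zero_mem

section Translation

variable {G 𝕜 F : Type*} [TopologicalSpace G] [AddCommGroup G] [IsTopologicalAddGroup G]
  [MeasurableSpace G] [BorelSpace G] [RCLike 𝕜] [NormedAddCommGroup F] {μ : Measure G}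
  [μ.IsAddLeftInvariant] {q : ℝ≥0∞}

/-- The translate `x ↦ f (x - c)` of a class `f` in `L^q`, expressed through Mathlib's action of
`DomAddAct`, for which `DomAddAct.mk a` acts by `x ↦ f (a + x)`. -/
noncomputable def translateLp (c : G) (f : Lp F q μ) : Lp F q μ :=
  DomAddAct.mk (-c) +ᵥ f

lemma coeFn_translateLp (c : G) {f : Lp F q μ} {g : G → F} (hfg : f =ᵐ[μ] g) :
    translateLp c f =ᵐ[μ] fun x => g (x - c) := by
  refine (DomAddAct.vadd_Lp_ae_eq (DomAddAct.mk (-c)) f).trans ?_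
  filter_upwards [(measurePreserving_vadd (-c) μ).quasiMeasurePreserving.ae_eq_comp hfg] with x hx
  simpa [neg_add_eq_sub] using hx

lemma norm_translateLp (c : G) (f : Lp F q μ) : ‖translateLp c f‖ = ‖f‖ :=
  DomAddAct.norm_vadd_Lp _ f

lemma translateLp_zero (f : Lp F q μ) : translateLp 0 f = f := by
  simp [translateLp]

variable [IsLocallyFiniteMeasure μ] [μ.InnerRegularCompactLTTop] [Fact (1 ≤ q)] [Fact (q ≠ ∞)]
  [NormedSpace 𝕜 F]

lemma continuous_translateLp (g : Lp F q μ) : Continuous fun c : G => translateLp c g :=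
  (DomAddAct.continuous_mk.comp continuous_neg).vadd continuous_const

lemma integrable_smul_translateLp [SecondCountableTopology G] {f : G → 𝕜} (hf : Integrable f μ)
    {T : G → G} (hT : Continuous T) (g : Lp F q μ) :
    Integrable (fun c => f c • translateLp (T c) g) μ := by
  refine (hf.norm.mul_const ‖g‖).mono' (hf.aestronglyMeasurable.smul
    ((continuous_translateLp g).comp hT).aestronglyMeasurable) (ae_of_all _ fun c => ?_)
  rw [norm_smul, norm_translateLp]

theorem coeFn_integral_smul_translateLp [SecondCountableTopology G] [SigmaFinite μ]
    [NormedSpace ℝ F] [CompleteSpace F] {f : G → 𝕜} (hf : Integrable f μ) (g : Lp F q μ) :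
    (∫ c, f c • translateLp c g ∂μ : Lp F q μ) =ᵐ[μ] f ⋆[lsmul 𝕜 𝕜, μ] g := by
  refine coeFn_integral_Lp (integrable_smul_translateLp hf continuous_id g)
    (hf.aestronglyMeasurable.convolution_integrand (lsmul 𝕜 𝕜)
      (Lp.aestronglyMeasurable g)).prod_swap (ae_of_all _ fun c => ?_)
  filter_upwards [Lp.coeFn_smul (f c) (translateLp c g), coeFn_translateLp c (ae_eq_refl g)]
    with x hsmul htranslate
  simp [hsmul, htranslate]

variable [SecondCountableTopology G] [SigmaFinite μ]

theorem integral_smul_translateLp_comm [μ.IsNegInvariant] {f g : Lp 𝕜 q μ} (hf : Integrable f μ)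
    (hg : Integrable g μ) :
    ∫ c, f c • translateLp c g ∂μ = ∫ c, g c • translateLp c f ∂μ := by
  have hconv : f ⋆[lsmul 𝕜 𝕜, μ] g = g ⋆[lsmul 𝕜 𝕜, μ] f := by
    ext x
    rw [convolution_lsmul_swap, convolution_lsmul]
    simp only [smul_eq_mul, mul_comm]
  exact Lp.ext ((coeFn_integral_smul_translateLp hf g).trans
    (hconv ▸ (coeFn_integral_smul_translateLp hg f).symm))

theorem integral_smul_translateLp_mem [μ.IsNegInvariant] {M : Submodule 𝕜 (Lp 𝕜 q μ)}
    (hM : IsClosed (M : Set (Lp 𝕜 q μ))) {f g : Lp 𝕜 q μ} (hf : Integrable f μ)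
    (hg : Integrable g μ) (hfM : ∀ c, translateLp c f ∈ M) :
    ∫ c, f c • translateLp c g ∂μ ∈ M := by
  rw [integral_smul_translateLp_comm hf hg]
  exact integral_mem_of_isClosed (M := M.restrictScalars ℝ) hM fun c => M.smul_mem _ (hfM c)

end Translation

section RadialUnits

variable {E 𝕜 : Type*} [NormedAddCommGroup E] [NormedSpace ℝ E] [MeasurableSpace E] [RCLike 𝕜]
  {μ : Measure E} {q : ℝ≥0∞}

/-- The single-unit networks of Park and Sandberg: the classes in `L^q` of
`x ↦ K ((x - c) / L)` for scales `L > 0` and centers `c`. -/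
def radialUnits (K : E → 𝕜) (q : ℝ≥0∞) (μ : Measure E) : Set (Lp 𝕜 q μ) :=
  {f | ∃ (L : ℝ) (c : E), 0 < L ∧ f =ᵐ[μ] fun x => K (L⁻¹ • (x - c))}

lemma exists_ae_eq_sum_of_mem_span_radialUnits {K : E → 𝕜} {f : Lp 𝕜 q μ}
    (hf : f ∈ Submodule.span 𝕜 (radialUnits K q μ)) :
    ∃ (r : ℕ) (A : Fin r → 𝕜) (L : Fin r → ℝ) (c : Fin r → E), (∀ i, 0 < L i) ∧
      f =ᵐ[μ] fun x => ∑ i, A i * K ((L i)⁻¹ • (x - c i)) := by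
  obtain ⟨r, A, g, rfl⟩ := Submodule.mem_span_set'.1 hf
  choose L c hL hg using fun i => (g i).2
  refine ⟨r, A, L, c, hL, (Lp.coeFn_fun_finsetSum _ _).trans ?_⟩
  have hterm : ∀ᵐ x ∂μ, ∀ i, (A i • (g i : Lp 𝕜 q μ)) x = A i * K ((L i)⁻¹ • (x - c i)) := by
    refine ae_all_iff.2 fun i => ?_
    filter_upwards [Lp.coeFn_smul (A i) (g i).1, hg i] with x hsmul hunit
    rw [hsmul, Pi.smul_apply, hunit, smul_eq_mul]
  filter_upwards [hterm] with x hx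
  exact Finset.sum_congr rfl fun i _ => hx i

end RadialUnits

section Dilation

variable {E 𝕜 F : Type*} [NormedAddCommGroup E] [NormedSpace ℝ E] [FiniteDimensional ℝ E]
  [MeasurableSpace E] [BorelSpace E] [RCLike 𝕜] [NormedAddCommGroup F]
  {μ : Measure E} [μ.IsAddHaarMeasure] {q : ℝ≥0∞}

lemma memLp_comp_smul {f : E → F} (hf : MemLp f q μ) {r : ℝ} (hr : r ≠ 0) :
    MemLp (fun x => f (r • x)) q μ := by
  have hmap : MemLp f q (μ.map (r • ·)) := by
    rw [Measure.map_addHaar_smul μ hr]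
    exact hf.smul_measure ENNReal.ofReal_ne_top
  exact hmap.comp_of_map (by fun_prop)

variable [Fact (1 ≤ q)] [Fact (q ≠ ∞)]

theorem tendsto_integral_smul_translateLp_dilation [NormedSpace 𝕜 F] [NormedSpace ℝ F]
    [CompleteSpace F] {K : E → 𝕜} (hK : Integrable K μ) (g : Lp F q μ) :
    Tendsto (fun L : ℝ => ∫ u, K u • translateLp (L • u) g ∂μ) (𝓝 0)
      (𝓝 ((∫ u, K u ∂μ) • g)) := by
  rw [← integral_smul_const]
  refine tendsto_integral_filter_of_dominated_convergence (fun u => ‖K u‖ * ‖g‖)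
    (Eventually.of_forall fun L =>
      (integrable_smul_translateLp hK (continuous_const_smul L) g).aestronglyMeasurable)
    (Eventually.of_forall fun L => ae_of_all _ fun u => ?_) (hK.norm.mul_const _)
    (ae_of_all _ fun u => Tendsto.const_smul ?_ _)
  · rw [norm_smul, norm_translateLp]
  · have hcont : Continuous fun L : ℝ => translateLp (L • u) g :=
      (continuous_translateLp g).comp (continuous_id.smul continuous_const)
    simpa [translateLp_zero] using hcont.tendsto 0

theorem integral_smul_translateLp_dilation_mem {K : E → 𝕜} (hK : Integrable K μ) (hKq : MemLp K q μ)
    {L : ℝ} (hL : 0 < L) {g : Lp 𝕜 q μ} (hg : Integrable g μ) :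
    ∫ u, K u • translateLp (L • u) g ∂μ ∈
      (Submodule.span 𝕜 (radialUnits K q μ)).topologicalClosure := by
  set M := (Submodule.span 𝕜 (radialUnits K q μ)).topologicalClosure
  have hKLq : MemLp (fun x => K (L⁻¹ • x)) q μ := memLp_comp_smul hKq (inv_ne_zero hL.ne')
  set k : Lp 𝕜 q μ := hKLq.toLp _
  have hk : k =ᵐ[μ] fun x => K (L⁻¹ • x) := hKLq.coeFn_toLp
  have hk_int : Integrable k μ := (hK.comp_smul (inv_ne_zero hL.ne')).congr hk.symm
  have htranslate (c : E) : translateLp c k ∈ M :=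
    Submodule.le_topologicalClosure _ (Submodule.subset_span ⟨L, c, hL, coeFn_translateLp c hk⟩)
  have hrescale : ∫ u, K u • translateLp (L • u) g ∂μ =
      (L ^ Module.finrank ℝ E)⁻¹ • ∫ c, k c • translateLp c g ∂μ :=
    calc ∫ u, K u • translateLp (L • u) g ∂μ
        = (L ^ Module.finrank ℝ E)⁻¹ • ∫ c, K (L⁻¹ • c) • translateLp c g ∂μ := by
          simpa only [inv_smul_smul₀ hL.ne'] using Measure.integral_comp_smul_of_nonneg μ
            (fun c => K (L⁻¹ • c) • translateLp c g) L (hR := hL.le)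
      _ = (L ^ Module.finrank ℝ E)⁻¹ • ∫ c, k c • translateLp c g ∂μ :=
          congrArg _ (integral_congr_ae (hk.symm.mono fun c hc => by simp only [hc]))
  rw [hrescale]
  exact M.smul_of_tower_mem _ (integral_smul_translateLp_mem
    (Submodule.isClosed_topologicalClosure _) hk_int hg htranslate)

theorem dense_span_radialUnits {K : E → 𝕜} (hK : Integrable K μ) (hKq : MemLp K q μ)
    (hK0 : ∫ x, K x ∂μ ≠ 0) :
    Dense (Submodule.span 𝕜 (radialUnits K q μ) : Set (Lp 𝕜 q μ)) := by
  set M := (Submodule.span 𝕜 (radialUnits K q μ)).topologicalClosure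
  have hM : IsClosed (M : Set (Lp 𝕜 q μ)) := Submodule.isClosed_topologicalClosure _
  have hintegrable : {g : Lp 𝕜 q μ | Integrable g μ} ⊆ M := fun g hg => by
    have hlim : (∫ x, K x ∂μ) • g ∈ M :=
      hM.mem_of_tendsto
        ((tendsto_integral_smul_translateLp_dilation hK g).mono_left nhdsWithin_le_nhds)
        (eventually_mem_nhdsWithin.mono fun L (hL : L ∈ Set.Ioi (0 : ℝ)) =>
          integral_smul_translateLp_dilation_mem hK hKq hL hg)
    exact (M.smul_mem_iff hK0).1 hlim
  exact ((dense_setOf_integrable_Lp Fact.out).mono hintegrable).of_closure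

end Dilation

end ParkSandberg

open ParkSandberg

theorem park_sandberg_universal_approximation_general {E 𝕜 : Type*} [NormedAddCommGroup E]
    [NormedSpace ℝ E] [FiniteDimensional ℝ E] [MeasurableSpace E] [BorelSpace E] [RCLike 𝕜]
    {μ : Measure E} [μ.IsAddHaarMeasure] {q : ℝ≥0∞} [Fact (1 ≤ q)] (hq : q ≠ ∞) {K : E → 𝕜}
    (hK : Integrable K μ) (hKq : MemLp K q μ) (hK0 : ∫ x, K x ∂μ ≠ 0) :
    Dense {f : Lp 𝕜 q μ |
      ∃ (r : ℕ) (A : Fin r → 𝕜) (L : Fin r → ℝ) (c : Fin r → E),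
        (∀ i, 0 < L i) ∧ f =ᵐ[μ] fun x => ∑ i, A i * K ((L i)⁻¹ • (x - c i))} := by
  have : Fact (q ≠ ∞) := ⟨hq⟩
  exact (dense_span_radialUnits hK hKq hK0).mono fun _ => exists_ae_eq_sum_of_mem_span_radialUnits

/-- Park–Sandberg universal approximation theorem: if `K : ℝ^d → ℝ` is integrable,
bounded, continuous almost everywhere and has nonzero integral, then finite linear
combinations of translated and dilated copies of `K` are dense in `L^q(ℝ^d)`
for all `1 ≤ q < ∞`. -/
theorem park_sandberg_universal_approximation
    (d : ℕ) (hd : 1 ≤ d)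
    (K : EuclideanSpace ℝ (Fin d) → ℝ)
    (hK_int : Integrable K)
    (hK_bdd : ∃ C : ℝ, ∀ x, |K x| ≤ C)
    (hK_cont : ∀ᵐ x ∂(volume : Measure (EuclideanSpace ℝ (Fin d))), ContinuousAt K x)
    (hK_nonzero : (∫ x, K x) ≠ 0)
    (q : ℝ≥0∞) [hq1 : Fact (1 ≤ q)] (hq2 : q ≠ ⊤) :
    Dense {f : Lp ℝ q (volume : Measure (EuclideanSpace ℝ (Fin d))) |
      ∃ (r : ℕ) (A : Fin r → ℝ) (L : Fin r → ℝ) (c : Fin r → EuclideanSpace ℝ (Fin d)),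
        (∀ i, 0 < L i) ∧
        (⇑f) =ᵐ[volume] fun x => ∑ i, A i * K ((L i)⁻¹ • (x - c i))} := by
  obtain ⟨C, hC⟩ := hK_bdd
  exact park_sandberg_universal_approximation_general hq2 hK_int
    (memLp_of_integrable_of_bound hq1.out hK_int (ae_of_all _ hC)) hK_nonzero
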